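/- Let T be a triangulated category, let (A,B) be a co-t-structure on T, let S := A[1]∩B be its coheart and Z := A[2]∩B its extended coheart. Let X, Y ⊆ Z be classes closed under extensions and under direct summands such that S⊆X, S[1]⊆Y, and Hom(U,V[1])=0 for all U∈X, V∈Y. Then the following are equivalent: (1) (X,Y) is a 1-cotorsion pair cut on Z; (2) (X,Y) is a left 1-cotorsion pair cut on S[1]; (3) (X,Y) is a right 1-cotorsion pair cut on S. -/

import Mathlib

/-!
The octahedral axiom carries the whole argument.

*From `S[1]` to `S`.* A triangle `K → U → s[1]` rotates to `s → K → U`, so left approximations of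
the objects of `S[1]` are the same data as right approximations of the objects of `S`.

*The extended coheart is `S * S[1]`.* For `z ∈ Z`, shift a co-t-structure decomposition
`a → z[-1] → b` to `a[1] → z → b[1]`. Since `A` and `B` are closed under extensions
(each is the orthogonal of the other), the rotations `b → a[1] → z` and `z[-2] → b[-1] → a`
of this triangle give `a[1] ∈ S` and `b ∈ S` (`exists_coheart_triangle`).

*Gluing.* Let `s₀ → z → s₁[1]` be such a triangle. A triangle `K → U → s₁[1]` with `U ∈ X`, `K ∈ Y`
yields by the octahedral axiom an object `N` with triangles `K → N → z` and `s₀ → N → U`; the second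
one puts `N` in `X`, as `S ⊆ X`. Dually, a triangle `s₀ → V → C` with `V ∈ Y`, `C ∈ X` yields
`z → N → C` and `V → N → s₁[1]`, and the second one puts `N` in `Y`, as `S[1] ⊆ Y`.
-/

open CategoryTheory Pretriangulated

universe v u

variable {T : Type u} [Category.{v} T] [Limits.HasZeroObject T] [HasShift T ℤ]
  [Preadditive T] [∀ n : ℤ, (shiftFunctor T n).Additive] [Pretriangulated T]
  [IsTriangulated T]

/-- `IsDT A B X` : there is a distinguished triangle `A → B → X → A[1]` in `T`. -/
def IsDT (A B X : T) : Prop :=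
  ∃ (f : A ⟶ B) (g : B ⟶ X) (h : X ⟶ A⟦(1 : ℤ)⟧), Triangle.mk f g h ∈ distTriang T

/-- `P` is closed under extensions. -/
def TClosedUnderExtensions (P : T → Prop) : Prop :=
  ∀ ⦃A B X : T⦄, IsDT A B X → P A → P X → P B

/-- `P` is closed under direct summands. -/
def TClosedUnderSummands (P : T → Prop) : Prop :=
  ∀ ⦃X Y : T⦄, P X → (∃ (i : Y ⟶ X) (r : X ⟶ Y), i ≫ r = 𝟙 Y) → P Y

/-- The class `S[n]`, consisting of the objects `s⟦n⟧` with `s ∈ S`. -/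
def ShiftCls (S : T → Prop) (n : ℤ) : T → Prop := fun M => ∃ s, S s ∧ M = s⟦n⟧

/-- `S * R` : the class of objects `M` admitting a distinguished triangle
`A → M → B → A[1]` with `A ∈ S` and `B ∈ R`. -/
def StarCls (S R : T → Prop) : T → Prop := fun M => ∃ A B, S A ∧ R B ∧ IsDT A M B

/-- `(X, Y)` is a left 1-cotorsion pair cut on `S`. -/
def IsLeft1CotorsionCutT (X Y S : T → Prop) : Prop :=
  TClosedUnderSummands X ∧
  (∀ ⦃A B : T⦄, X A → S A → Y B → ∀ f : A ⟶ B⟦(1 : ℤ)⟧, f = 0) ∧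
  (∀ ⦃s : T⦄, S s → ∃ (K A : T), X A ∧ (∃ y, Y y ∧ Nonempty (K ≅ y)) ∧ IsDT K A s)

/-- `(X, Y)` is a right 1-cotorsion pair cut on `S`. -/
def IsRight1CotorsionCutT (X Y S : T → Prop) : Prop :=
  TClosedUnderSummands Y ∧
  (∀ ⦃A B : T⦄, X A → Y B → S B → ∀ f : A ⟶ B⟦(1 : ℤ)⟧, f = 0) ∧
  (∀ ⦃s : T⦄, S s → ∃ (B Cn : T), Y B ∧ (∃ x, X x ∧ Nonempty (Cn ≅ x)) ∧ IsDT s B Cn)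

/-- `(X, Y)` is a 1-cotorsion pair cut on `S`. -/
def Is1CotorsionCutT (X Y S : T → Prop) : Prop :=
  IsLeft1CotorsionCutT X Y S ∧ IsRight1CotorsionCutT X Y S

set_option linter.unusedSectionVars false

lemma TClosedUnderSummands.of_iso {P : T → Prop} (hP : TClosedUnderSummands P) {M N : T}
    (e : M ≅ N) (h : P M) : P N :=
  hP h ⟨e.inv, e.hom, e.inv_hom_id⟩

lemma IsDT.iso {M₁ M₂ M₃ N₁ N₂ N₃ : T} (h : IsDT M₁ M₂ M₃) (e₁ : M₁ ≅ N₁) (e₂ : M₂ ≅ N₂)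
    (e₃ : M₃ ≅ N₃) : IsDT N₁ N₂ N₃ := by
  obtain ⟨f, g, k, hT⟩ := h
  refine ⟨e₁.inv ≫ f ≫ e₂.hom, e₂.inv ≫ g ≫ e₃.hom, e₃.inv ≫ k ≫ e₁.hom⟦(1 : ℤ)⟧', ?_⟩
  refine isomorphic_distinguished _ hT _ (Triangle.isoMk _ _ e₁.symm e₂.symm e₃.symm ?_ ?_ ?_)
  · have : (e₁.inv ≫ f ≫ e₂.hom) ≫ e₂.inv = e₁.inv ≫ f := by simp
    exact this
  · have : (e₂.inv ≫ g ≫ e₃.hom) ≫ e₃.inv = e₂.inv ≫ g := by simp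
    exact this
  · have : (e₃.inv ≫ k ≫ e₁.hom⟦(1 : ℤ)⟧') ≫ e₁.inv⟦(1 : ℤ)⟧' = e₃.inv ≫ k := by
      simp [← Functor.map_comp]
    exact this

lemma IsDT.rot {M₁ M₂ M₃ : T} (h : IsDT M₁ M₂ M₃) : IsDT M₂ M₃ (M₁⟦(1 : ℤ)⟧) := by
  obtain ⟨f, g, k, hT⟩ := h
  exact ⟨_, _, _, rot_of_distTriang _ hT⟩

lemma IsDT.invRot {M₁ M₂ M₃ : T} (h : IsDT M₁ M₂ M₃) : IsDT (M₃⟦(-1 : ℤ)⟧) M₁ M₂ := by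
  obtain ⟨f, g, k, hT⟩ := h
  exact ⟨_, _, _, inv_rot_of_distTriang _ hT⟩

lemma IsDT.unrot {M₁ M₂ M₃ : T} (h : IsDT M₂ M₃ (M₁⟦(1 : ℤ)⟧)) : IsDT M₁ M₂ M₃ :=
  h.invRot.iso (shiftShiftNeg M₁ (1 : ℤ)) (Iso.refl _) (Iso.refl _)

lemma IsDT.shift {M₁ M₂ M₃ : T} (h : IsDT M₁ M₂ M₃) (n : ℤ) :
    IsDT (M₁⟦n⟧) (M₂⟦n⟧) (M₃⟦n⟧) := by
  obtain ⟨f, g, k, hT⟩ := h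
  exact ⟨_, _, _, Triangle.shift_distinguished _ hT n⟩

/-- One half of the associativity of `*`: an object of `M₁ * (N₁ * N₂)` lies in
`(M₁ * N₁) * N₂`. -/
lemma IsDT.assoc_left {M₁ M M₃ N₁ N₂ : T} (h : IsDT M₁ M M₃) (h' : IsDT N₁ M₃ N₂) :
    ∃ N : T, IsDT N M N₂ ∧ IsDT M₁ N N₁ := by
  obtain ⟨f, g, k, hT⟩ := h
  obtain ⟨f', g', k', hT'⟩ := h'
  obtain ⟨N, f'', k'', hT''⟩ := distinguished_cocone_triangle₁ (g ≫ g')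
  exact ⟨N, ⟨_, _, _, hT''⟩, ⟨_, _, _, (Triangulated.someOctahedron' rfl hT hT' hT'').mem⟩⟩

/-- The other half of the associativity of `*`: an object of `(N₁ * N₂) * M₃` lies in
`N₁ * (N₂ * M₃)`. -/
lemma IsDT.assoc_right {M₁ M M₃ N₁ N₂ : T} (h : IsDT M₁ M M₃) (h' : IsDT N₁ M₁ N₂) :
    ∃ N : T, IsDT N₁ M N ∧ IsDT N₂ N M₃ := by
  obtain ⟨f, g, k, hT⟩ := h
  obtain ⟨f', g', k', hT'⟩ := h'
  obtain ⟨N, g'', k'', hT''⟩ := distinguished_cocone_triangle (f' ≫ f)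
  exact ⟨N, ⟨_, _, _, hT''⟩, ⟨_, _, _, (Triangulated.someOctahedron rfl hT' hT hT'').mem⟩⟩

/-- The left class of a co-t-structure consists of all objects without nonzero morphisms to `B`,
hence is closed under extensions. -/
lemma extClosed_left {A B : T → Prop} (hAsum : TClosedUnderSummands A)
    (hAB : ∀ ⦃a b : T⦄, A a → B b → ∀ f : a ⟶ b, f = 0)
    (hcover : ∀ M : T, ∃ a b, A a ∧ B b ∧ IsDT a M b) : TClosedUnderExtensions A := by
  rintro M₁ M M₃ ⟨f, g, h, hT⟩ h₁ h₃
  obtain ⟨a, b, ha, hb, i, p, q, hT'⟩ := hcover M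
  have hp : p = 0 := by
    obtain ⟨p', hp'⟩ := Triangle.yoneda_exact₂ _ hT p (hAB h₁ hb _)
    rw [hp', hAB h₃ hb p']
    exact Limits.comp_zero
  obtain ⟨j, hj⟩ := Triangle.coyoneda_exact₂ _ hT' (𝟙 M) ((Category.id_comp p).trans hp)
  exact hAsum ha ⟨j, i, hj.symm⟩

/-- The right class of a co-t-structure consists of all objects without nonzero morphisms from `A`,
hence is closed under extensions. -/
lemma extClosed_right {A B : T → Prop} (hBsum : TClosedUnderSummands B)
    (hAB : ∀ ⦃a b : T⦄, A a → B b → ∀ f : a ⟶ b, f = 0)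
    (hcover : ∀ M : T, ∃ a b, A a ∧ B b ∧ IsDT a M b) : TClosedUnderExtensions B := by
  rintro M₁ M M₃ ⟨f, g, h, hT⟩ h₁ h₃
  obtain ⟨a, b, ha, hb, i, p, q, hT'⟩ := hcover M
  have hi : i = 0 := by
    obtain ⟨i', hi'⟩ := Triangle.coyoneda_exact₂ _ hT i (hAB ha h₃ _)
    rw [hi', hAB ha h₁ i']
    exact Limits.zero_comp
  obtain ⟨r, hr⟩ := Triangle.yoneda_exact₂ _ hT' (𝟙 M) ((Category.comp_id i).trans hi)
  exact hBsum hb ⟨p, r, hr.symm⟩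

/-- The extended coheart `A[2] ∩ B` is contained in `S * S[1]`, where `S = A[1] ∩ B`
is the coheart. -/
lemma exists_coheart_triangle {A B : T → Prop}
    (hAsum : TClosedUnderSummands A) (hBsum : TClosedUnderSummands B)
    (hAB : ∀ ⦃a b : T⦄, A a → B b → ∀ f : a ⟶ b, f = 0)
    (hcover : ∀ M : T, ∃ a b, A a ∧ B b ∧ IsDT a M b)
    {z : T} (hzA : A (z⟦(-2 : ℤ)⟧)) (hzB : B z) :
    ∃ s₀ s₁ : T, (A (s₀⟦(-1 : ℤ)⟧) ∧ B s₀) ∧ (A (s₁⟦(-1 : ℤ)⟧) ∧ B s₁) ∧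
      IsDT s₀ z (s₁⟦(1 : ℤ)⟧) := by
  obtain ⟨a, b, ha, hb, h⟩ := hcover (z⟦(-1 : ℤ)⟧)
  let e : z⟦(-1 : ℤ)⟧⟦(1 : ℤ)⟧ ≅ z := shiftNegShift z (1 : ℤ)
  let ea : a⟦(1 : ℤ)⟧⟦(-1 : ℤ)⟧ ≅ a := shiftShiftNeg a (1 : ℤ)
  refine ⟨a⟦(1 : ℤ)⟧, b, ⟨hAsum.of_iso ea.symm ha, ?_⟩, ⟨?_, hb⟩,
    (h.shift 1).iso (Iso.refl _) e (Iso.refl _)⟩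
  · exact extClosed_right hBsum hAB hcover (h.rot.rot.iso (Iso.refl _) (Iso.refl _) e) hb hzB
  · refine extClosed_left hAsum hAB hcover
      ((h.rot.shift (-1)).iso (Iso.refl _) (Iso.refl _) ea) ?_ ha
    exact hAsum.of_iso ((shiftFunctorAdd' T (-1) (-1) (-2) (by norm_num)).app z) hzA

theorem stmt_19 (A B : T → Prop)
    (hAsum : TClosedUnderSummands A) (hBsum : TClosedUnderSummands B)
    (hAshift : ∀ ⦃M : T⦄, A M → A (M⟦(-1 : ℤ)⟧))
    (hAB : ∀ ⦃a b : T⦄, A a → B b → ∀ f : a ⟶ b, f = 0)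
    (hcover : ∀ M : T, ∃ a b, A a ∧ B b ∧ IsDT a M b)
    (S Z X Y : T → Prop)
    (hS : S = fun M => A (M⟦(-1 : ℤ)⟧) ∧ B M)
    (hZ : Z = fun M => A (M⟦(-2 : ℤ)⟧) ∧ B M)
    (hXZ : ∀ ⦃M : T⦄, X M → Z M) (hYZ : ∀ ⦃M : T⦄, Y M → Z M)
    (hXext : TClosedUnderExtensions X) (hYext : TClosedUnderExtensions Y)
    (hXsum : TClosedUnderSummands X) (hYsum : TClosedUnderSummands Y)
    (hSX : ∀ ⦃s : T⦄, S s → X s)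
    (hS1Y : ∀ ⦃s : T⦄, S s → Y (s⟦(1 : ℤ)⟧))
    (hvan : ∀ ⦃U V : T⦄, X U → Y V → ∀ f : U ⟶ V⟦(1 : ℤ)⟧, f = 0) :
    (Is1CotorsionCutT X Y Z ↔ IsLeft1CotorsionCutT X Y (ShiftCls S 1)) ∧
    (IsLeft1CotorsionCutT X Y (ShiftCls S 1) ↔ IsRight1CotorsionCutT X Y S) := by
  have h12 : Is1CotorsionCutT X Y Z → IsLeft1CotorsionCutT X Y (ShiftCls S 1) := by
    rintro ⟨⟨-, -, h⟩, -⟩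
    refine ⟨hXsum, fun _ _ hU _ hV => hvan hU hV, ?_⟩
    rintro _ ⟨s, hs, rfl⟩
    exact h (hYZ (hS1Y hs))
  have h23 : IsLeft1CotorsionCutT X Y (ShiftCls S 1) → IsRight1CotorsionCutT X Y S := by
    rintro ⟨-, -, h⟩
    refine ⟨hYsum, fun _ _ hU hV _ => hvan hU hV, fun s hs => ?_⟩
    obtain ⟨K, U, hU, ⟨y, hy, ⟨e⟩⟩, hT⟩ := h ⟨s, hs, rfl⟩
    exact ⟨K, U, hYsum.of_iso e.symm hy, ⟨U, hU, ⟨Iso.refl _⟩⟩, hT.unrot⟩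
  have h32 : IsRight1CotorsionCutT X Y S → IsLeft1CotorsionCutT X Y (ShiftCls S 1) := by
    rintro ⟨-, -, h⟩
    refine ⟨hXsum, fun _ _ hU _ hV => hvan hU hV, ?_⟩
    rintro _ ⟨s, hs, rfl⟩
    obtain ⟨V, C, hV, ⟨x, hx, ⟨e⟩⟩, hT⟩ := h hs
    exact ⟨V, C, hXsum.of_iso e.symm hx, ⟨V, hV, ⟨Iso.refl _⟩⟩, hT.rot⟩
  have hdec : ∀ ⦃z : T⦄, Z z → ∃ s₀ s₁ : T, S s₀ ∧ S s₁ ∧ IsDT s₀ z (s₁⟦(1 : ℤ)⟧) := by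
    subst hS hZ
    exact fun z hz => exists_coheart_triangle hAsum hBsum hAB hcover hz.1 hz.2
  have h21 : IsLeft1CotorsionCutT X Y (ShiftCls S 1) → Is1CotorsionCutT X Y Z := by
    intro hL
    refine ⟨⟨hXsum, fun _ _ hU _ hV => hvan hU hV, fun z hz => ?_⟩,
      ⟨hYsum, fun _ _ hU hV _ => hvan hU hV, fun z hz => ?_⟩⟩
    · obtain ⟨s₀, s₁, hs₀, hs₁, hT⟩ := hdec hz
      obtain ⟨K, U, hU, hK, hT'⟩ := hL.2.2 ⟨s₁, hs₁, rfl⟩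
      -- `z` lies in `s₀ * (U * K[1]) = (s₀ * U) * K[1]`.
      obtain ⟨N, hN, hN'⟩ := hT.assoc_left hT'.rot
      exact ⟨K, N, hXext hN' (hSX hs₀) hU, hK, hN.unrot⟩
    · obtain ⟨s₀, s₁, hs₀, hs₁, hT⟩ := hdec hz
      obtain ⟨V, C, hV, ⟨x, hx, ⟨e⟩⟩, hT'⟩ := (h23 hL).2.2 hs₀
      -- `z` lies in `(C[-1] * V) * s₁[1] = C[-1] * (V * s₁[1])`.
      obtain ⟨N, hN, hN'⟩ := hT.assoc_right hT'.invRot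
      exact ⟨N, C, hYext hN' hV (hS1Y hs₁), ⟨x, hx, ⟨e⟩⟩,
        hN.rot.iso (Iso.refl _) (Iso.refl _) (shiftNegShift C (1 : ℤ))⟩
  exact ⟨⟨h12, h21⟩, ⟨h23, h32⟩⟩
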